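/- arXiv:2206.09139 — 3 statements merged into one kernel-verified Lean document; each statement's English description precedes it below -/
import Mathlib

section
/- Let R_f, R_e be real n×n matrices with R_f R_eᵀ = R_e R_fᵀ positive semidefinite and rank [R_f R_e] = n, and let R = {(f,e) ∈ ℝ^n × ℝ^n : R_f f − R_e e = 0} be the associated linear resistive structure. Then R admits the image representation R = {(R_eᵀ λ, R_fᵀ λ) : λ ∈ ℝ^n}, and consequently ⟨e, f⟩ ≥ 0 for every (f,e) ∈ R. -/
/-- The duality pairing (standard inner product) on `ℝ^n`. -/
noncomputable def dot {n : ℕ} (e f : Fin n → ℝ) : ℝ := ∑ i, e i * f i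

/-- A linear resistive structure `R = {(f,e) : R_f f − R_e e = 0}` with
`R_f R_eᵀ = R_e R_fᵀ ⪰ 0` and `rank [R_f R_e] = n` admits the image
representation `R = {(R_eᵀ λ, R_fᵀ λ)}`, and consequently `⟨e, f⟩ ≥ 0` on `R`. -/
theorem linearResistive_image_repr {n : ℕ} (Rf Re : Matrix (Fin n) (Fin n) ℝ)
    (hsym : Rf * Re.transpose = Re * Rf.transpose)
    (hpsd : (Rf * Re.transpose).PosSemidef)
    (hrank : (Matrix.fromCols Rf Re).rank = n) :
    {p : (Fin n → ℝ) × (Fin n → ℝ) | Rf.mulVec p.1 - Re.mulVec p.2 = 0} =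
      {p : (Fin n → ℝ) × (Fin n → ℝ) | ∃ l : Fin n → ℝ,
        p = (Re.transpose.mulVec l, Rf.transpose.mulVec l)} ∧
    ∀ p : (Fin n → ℝ) × (Fin n → ℝ),
      Rf.mulVec p.1 - Re.mulVec p.2 = 0 → 0 ≤ dot p.2 p.1 := by
  classical
  let L : ((Fin n → ℝ) × (Fin n → ℝ)) →ₗ[ℝ] (Fin n → ℝ) :=
    Rf.mulVecLin.comp (LinearMap.fst ℝ _ _) - Re.mulVecLin.comp (LinearMap.snd ℝ _ _)
  let G : (Fin n → ℝ) →ₗ[ℝ] ((Fin n → ℝ) × (Fin n → ℝ)) :=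
    (Re.transpose.mulVecLin).prod (Rf.transpose.mulVecLin)
  have hL : ∀ p, L p = Rf.mulVec p.1 - Re.mulVec p.2 := fun p => rfl
  have hG : ∀ l, G l = (Re.transpose.mulVec l, Rf.transpose.mulVec l) := fun l => rfl
  have htop : LinearMap.range (Matrix.fromCols Rf Re).mulVecLin = ⊤ := by
    apply Submodule.eq_top_of_finrank_eq
    rw [Module.finrank_fin_fun]
    exact hrank
  have hsurj : Function.Surjective L := by
    intro y
    obtain ⟨v, hv⟩ := LinearMap.range_eq_top.mp htop y
    refine ⟨(v ∘ Sum.inl, -(v ∘ Sum.inr)), ?_⟩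
    rw [hL, ← hv, Matrix.mulVecLin_apply, Matrix.fromCols_mulVec]
    simp [Matrix.mulVec_neg]
  have hinj : LinearMap.ker G = ⊥ := by
    rw [LinearMap.ker_eq_bot']
    intro l hl
    rw [hG, Prod.mk_eq_zero] at hl
    obtain ⟨h1, h2⟩ := hl
    obtain ⟨x, hx⟩ := hsurj l
    rw [Matrix.mulVec_transpose] at h1 h2
    have : l ⬝ᵥ L x = 0 := by
      rw [hL, dotProduct_sub, Matrix.dotProduct_mulVec, Matrix.dotProduct_mulVec, h1, h2]
      simp
    rw [hx] at this
    exact dotProduct_self_eq_zero.mp this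
  have hle : LinearMap.range G ≤ LinearMap.ker L := by
    rintro _ ⟨l, rfl⟩
    rw [LinearMap.mem_ker, hL, hG]
    simp [Matrix.mulVec_mulVec, hsym]
  have heq : LinearMap.range G = LinearMap.ker L := by
    apply Submodule.eq_of_le_of_finrank_eq hle
    have a := LinearMap.finrank_range_add_finrank_ker G
    have b := LinearMap.finrank_range_add_finrank_ker L
    rw [hinj, finrank_bot] at a
    rw [LinearMap.range_eq_top.mpr hsurj, finrank_top, Module.finrank_prod] at b
    omega
  have key : ∀ p : (Fin n → ℝ) × (Fin n → ℝ), Rf.mulVec p.1 - Re.mulVec p.2 = 0 ↔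
      ∃ l : Fin n → ℝ, p = (Re.transpose.mulVec l, Rf.transpose.mulVec l) := by
    intro p
    rw [← hL, ← LinearMap.mem_ker, ← heq, LinearMap.mem_range]
    exact exists_congr fun l => eq_comm
  refine ⟨Set.ext key, fun p hp => ?_⟩
  obtain ⟨l, rfl⟩ := (key p).mp hp
  have h := hpsd.dotProduct_mulVec_nonneg l
  rw [star_trivial, ← Matrix.mulVec_mulVec, Matrix.dotProduct_mulVec,
    ← Matrix.mulVec_transpose] at h
  exact h
end

section
/- Let R ⊆ ℝ^n × ℝ^n be a linear resistive structure given by n×n matrices R_f, R_e with R_f R_eᵀ = R_e R_fᵀ ⪰ 0 and rank [R_f R_e] = n, and let R₀ = R₀ᵀ ⪰ 0 be any symmetric positive semidefinite matrix satisfying R_e R₀ R_eᵀ = R_e R_fᵀ. Define φ_R : ℝ^n → (−∞,+∞] by φ_R(f) = ½ fᵀ R₀ f if f ∈ im R_eᵀ and φ_R(f) = +∞ otherwise. Then φ_R is a proper lower semicontinuous convex function and R = {(f,e) : e ∈ ∂φ_R(f)}; in particular, R is maximal cyclically monotone. -/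
open scoped Classical

/-- The subdifferential of `φ` at `f` w.r.t. a pairing `p`. -/
def subdiff {α : Type*} [AddCommGroup α] (p : α → α → ℝ) (φ : α → EReal) (f : α) :
    Set α :=
  {e | φ f ≠ ⊤ ∧ ∀ f', φ f + ((p e (f' - f) : ℝ) : EReal) ≤ φ f'}

/-- Proper, lower semicontinuous, convex extended-real-valued function. -/
def ProperLscConvex {α : Type*} [AddCommGroup α] [Module ℝ α] [TopologicalSpace α]
    (φ : α → EReal) : Prop :=
  (∃ x, φ x ≠ ⊤) ∧ (∀ x, φ x ≠ ⊥) ∧ LowerSemicontinuous φ ∧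
    ∀ x y : α, ∀ t : ℝ, 0 ≤ t → t ≤ 1 →
      φ (t • x + (1 - t) • y) ≤ (t : EReal) * φ x + ((1 - t : ℝ) : EReal) * φ y

/-- Cyclically monotone relation `M ⊆ F × E` (elements `(f, e)`). -/
def CycMono2 {n : ℕ} (M : Set ((Fin n → ℝ) × (Fin n → ℝ))) : Prop :=
  ∀ m : ℕ, 1 ≤ m → ∀ (f e : ℕ → Fin n → ℝ),
    (∀ i ≤ m, (f i, e i) ∈ M) → f (m + 1) = f 0 →
    0 ≤ ∑ i ∈ Finset.range (m + 1), dot (e i) (f i - f (i + 1))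

/-- Maximal cyclically monotone relation. -/
def MaxCycMono2 {n : ℕ} (M : Set ((Fin n → ℝ) × (Fin n → ℝ))) : Prop :=
  CycMono2 M ∧ ∀ M', CycMono2 M' → M ⊆ M' → M' = M

/-- The generating function `φ_R(f) = ½ fᵀ R₀ f` on `im R_eᵀ`, `+∞` elsewhere. -/
noncomputable def phiR {n : ℕ} (Re R0 : Matrix (Fin n) (Fin n) ℝ) :
    (Fin n → ℝ) → EReal :=
  fun f => if ∃ l : Fin n → ℝ, f = Re.transpose.mulVec l
    then (((1 / 2) * dot f (R0.mulVec f) : ℝ) : EReal) else ⊤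

open Matrix Filter Topology

theorem dot_eq {n : ℕ} (e f : Fin n → ℝ) : dot e f = e ⬝ᵥ f := rfl

theorem psd_nonneg {n : ℕ} {A : Matrix (Fin n) (Fin n) ℝ} (hA : A.PosSemidef)
    (x : Fin n → ℝ) : 0 ≤ x ⬝ᵥ (A *ᵥ x) := by
  simpa using hA.dotProduct_mulVec_nonneg x

theorem psd_symm {n : ℕ} {A : Matrix (Fin n) (Fin n) ℝ} (hA : A.PosSemidef)
    (x y : Fin n → ℝ) : x ⬝ᵥ (A *ᵥ y) = y ⬝ᵥ (A *ᵥ x) := by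
  have h : Aᵀ = A := by simpa using hA.isHermitian.eq
  rw [Matrix.dotProduct_mulVec, ← Matrix.mulVec_transpose, h, dotProduct_comm]

theorem tdot {n : ℕ} (A : Matrix (Fin n) (Fin n) ℝ)
    (x y : Fin n → ℝ) : x ⬝ᵥ (Aᵀ *ᵥ y) = (A *ᵥ x) ⬝ᵥ y := by
  rw [Matrix.dotProduct_mulVec, Matrix.vecMul_transpose]

theorem inj_of_rank {n : ℕ} (Rf Re : Matrix (Fin n) (Fin n) ℝ)
    (hrank : (Matrix.fromCols Rf Re).rank = n) (l : Fin n → ℝ)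
    (h1 : Rfᵀ *ᵥ l = 0) (h2 : Reᵀ *ᵥ l = 0) : l = 0 := by
  have hli : LinearIndependent ℝ (Matrix.fromCols Rf Re).row := by
    rw [linearIndependent_iff_card_eq_finrank_span, Set.finrank,
      ← Matrix.rank_eq_finrank_span_row, hrank, Fintype.card_fin]
  have hinj := Matrix.vecMul_injective_iff.2 hli
  apply hinj
  simp only [Matrix.vecMul_fromCols, Matrix.zero_vecMul]
  rw [← Matrix.mulVec_transpose, ← Matrix.mulVec_transpose, h1, h2]
  ext i
  cases i <;> simp

theorem sum_unit {n : ℕ} (Rf Re : Matrix (Fin n) (Fin n) ℝ)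
    (hpsd : (Rf * Re.transpose).PosSemidef)
    (hrank : (Matrix.fromCols Rf Re).rank = n) : IsUnit (Rf + Re)ᵀ := by
  rw [← Matrix.mulVec_injective_iff_isUnit]
  rw [← Matrix.coe_mulVecLin, injective_iff_map_eq_zero]
  intro l hl
  rw [Matrix.mulVecLin_apply, Matrix.transpose_add, Matrix.add_mulVec] at hl
  have h := psd_nonneg hpsd l
  rw [← Matrix.mulVec_mulVec, ← Matrix.transpose_transpose Rf, tdot,
    eq_neg_of_add_eq_zero_left hl, neg_dotProduct] at h
  have h0 : (Reᵀ *ᵥ l) ⬝ᵥ (Reᵀ *ᵥ l) = 0 :=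
    le_antisymm (by linarith) (Finset.sum_nonneg fun i _ => mul_self_nonneg _)
  have h2 := dotProduct_self_eq_zero.1 h0
  refine inj_of_rank Rf Re hrank l ?_ h2
  rw [h2, add_zero] at hl
  exact hl

theorem exists_sum {n : ℕ} (Rf Re : Matrix (Fin n) (Fin n) ℝ)
    (hpsd : (Rf * Re.transpose).PosSemidef)
    (hrank : (Matrix.fromCols Rf Re).rank = n) (v : Fin n → ℝ) :
    ∃ l, Rfᵀ *ᵥ l + Reᵀ *ᵥ l = v := by
  obtain ⟨l, hl⟩ := (Matrix.mulVec_surjective_iff_isUnit.2 (sum_unit Rf Re hpsd hrank)) v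
  exact ⟨l, by rw [← Matrix.add_mulVec, ← Matrix.transpose_add]; exact hl⟩

theorem R_param {n : ℕ} (Rf Re : Matrix (Fin n) (Fin n) ℝ)
    (hsym : Rf * Re.transpose = Re * Rf.transpose)
    (hpsd : (Rf * Re.transpose).PosSemidef)
    (hrank : (Matrix.fromCols Rf Re).rank = n) (f e : Fin n → ℝ)
    (h : Rf *ᵥ f - Re *ᵥ e = 0) : ∃ l, f = Reᵀ *ᵥ l := by
  obtain ⟨l, hl⟩ := exists_sum Rf Re hpsd hrank (f + e)
  refine ⟨l, ?_⟩
  have hs : Rf *ᵥ (Reᵀ *ᵥ l) = Re *ᵥ (Rfᵀ *ᵥ l) := by simp [hsym]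
  have he : e = Rfᵀ *ᵥ l + Reᵀ *ᵥ l - f := by rw [hl]; abel
  have hU : IsUnit (Rf + Re) := by
    have := sum_unit Rf Re hpsd hrank
    rwa [Matrix.isUnit_transpose] at this
  apply Matrix.mulVec_injective_iff_isUnit.2 hU
  rw [he, Matrix.mulVec_sub, Matrix.mulVec_add, ← hs] at h
  simp only [Matrix.add_mulVec]
  rw [← sub_eq_zero, ← h]
  abel

theorem phiR_pos {n : ℕ} (Re R0 : Matrix (Fin n) (Fin n) ℝ) (f : Fin n → ℝ)
    (h : ∃ l : Fin n → ℝ, f = Reᵀ *ᵥ l) :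
    phiR Re R0 f = (((1 / 2) * (f ⬝ᵥ (R0 *ᵥ f)) : ℝ) : EReal) := if_pos h

theorem phiR_neg {n : ℕ} (Re R0 : Matrix (Fin n) (Fin n) ℝ) (f : Fin n → ℝ)
    (h : ¬ ∃ l : Fin n → ℝ, f = Reᵀ *ᵥ l) :
    phiR Re R0 f = ⊤ := if_neg h

theorem phiR_ne_bot {n : ℕ} (Re R0 : Matrix (Fin n) (Fin n) ℝ) (f : Fin n → ℝ) :
    phiR Re R0 f ≠ ⊥ := by
  by_cases h : ∃ l : Fin n → ℝ, f = Reᵀ *ᵥ l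
  · rw [phiR_pos _ _ _ h]; exact EReal.coe_ne_bot _
  · rw [phiR_neg _ _ _ h]; simp

theorem phiR_plc {n : ℕ} (Re R0 : Matrix (Fin n) (Fin n) ℝ) (hR0 : R0.PosSemidef) :
    ProperLscConvex (phiR Re R0) := by
  refine ⟨⟨0, ?_⟩, phiR_ne_bot Re R0, ?_, ?_⟩
  · rw [phiR_pos _ _ _ ⟨0, by simp⟩]; exact EReal.coe_ne_top _
  · intro x y hy
    by_cases h : ∃ l : Fin n → ℝ, x = Reᵀ *ᵥ l
    · rw [phiR_pos _ _ _ h] at hy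
      have hc : Continuous fun f : Fin n → ℝ => (((1 / 2) * (f ⬝ᵥ (R0 *ᵥ f)) : ℝ) : EReal) := by
        apply continuous_coe_real_ereal.comp
        fun_prop
      filter_upwards [hc.continuousAt.eventually_const_lt hy] with z hz
      by_cases h' : ∃ l : Fin n → ℝ, z = Reᵀ *ᵥ l
      · rw [phiR_pos _ _ _ h']; exact hz
      · rw [phiR_neg _ _ _ h']; exact lt_of_lt_of_le hz le_top
    · rw [phiR_neg _ _ _ h] at hy
      have hcl := (LinearMap.range (Reᵀ).mulVecLin).closed_of_finiteDimensional
      have hx : x ∈ ((LinearMap.range (Reᵀ).mulVecLin : Set (Fin n → ℝ)))ᶜ := by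
        rintro ⟨l, hl⟩
        exact h ⟨l, hl.symm⟩
      filter_upwards [hcl.isOpen_compl.mem_nhds hx] with z hz
      rw [phiR_neg]
      · exact hy
      · rintro ⟨l, hl⟩
        exact hz ⟨l, hl.symm⟩
  · intro x y t ht0 ht1
    rcases ht0.eq_or_lt with rfl | ht0
    · simp
    rcases ht1.eq_or_lt with rfl | ht1
    · simp
    have ht1' : 0 < 1 - t := by linarith
    by_cases hx : ∃ l : Fin n → ℝ, x = Reᵀ *ᵥ l
    · by_cases hy : ∃ l : Fin n → ℝ, y = Reᵀ *ᵥ l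
      · have hxy : ∃ l : Fin n → ℝ, t • x + (1 - t) • y = Reᵀ *ᵥ l := by
          obtain ⟨a, rfl⟩ := hx
          obtain ⟨b, rfl⟩ := hy
          exact ⟨t • a + (1 - t) • b, by simp [Matrix.mulVec_add, Matrix.mulVec_smul]⟩
        rw [phiR_pos _ _ _ hx, phiR_pos _ _ _ hy, phiR_pos _ _ _ hxy]
        norm_cast
        have h1 := psd_nonneg hR0 (x - y)
        have h2 := psd_symm hR0 x y
        simp only [Matrix.mulVec_add, Matrix.mulVec_sub, Matrix.mulVec_smul, dotProduct_add,
          add_dotProduct, sub_dotProduct, dotProduct_sub, smul_dotProduct, dotProduct_smul,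
          smul_eq_mul] at h1 ⊢
        rw [h2] at h1 ⊢
        nlinarith [mul_nonneg (mul_pos ht0 ht1').le h1]
      · rw [phiR_neg _ _ _ hy, EReal.coe_mul_top_of_pos ht1', EReal.add_top_of_ne_bot]
        · exact le_top
        · rw [phiR_pos _ _ _ hx]; norm_cast; exact EReal.coe_ne_bot _
    · rw [phiR_neg _ _ _ hx, EReal.coe_mul_top_of_pos ht0, EReal.top_add_of_ne_bot]
      · exact le_top
      · by_cases hy : ∃ l : Fin n → ℝ, y = Reᵀ *ᵥ l
        · rw [phiR_pos _ _ _ hy]; norm_cast; exact EReal.coe_ne_bot _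
        · rw [phiR_neg _ _ _ hy, EReal.coe_mul_top_of_pos ht1']; simp

theorem lin_zero (a b : ℝ) (h : ∀ t : ℝ, 0 ≤ t * t * a + t * b) : b = 0 := by
  by_contra hb
  have hb2 : 0 < b * b := mul_self_pos.2 hb
  have ha : 0 < |a| + 1 := by positivity
  have h1 := h (-b / (|a| + 1))
  have h2 : (-b / (|a| + 1)) * (-b / (|a| + 1)) * a + (-b / (|a| + 1)) * b
      = b * b * (a - (|a| + 1)) / ((|a| + 1) * (|a| + 1)) := by field_simp; ring
  rw [h2] at h1
  have h3 : b * b * (a - (|a| + 1)) / ((|a| + 1) * (|a| + 1)) < 0 :=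
    div_neg_of_neg_of_pos (by nlinarith [le_abs_self a]) (by positivity)
  linarith

theorem mem_subdiff {n : ℕ} (Re R0 : Matrix (Fin n) (Fin n) ℝ) (hR0 : R0.PosSemidef)
    (f e : Fin n → ℝ) : e ∈ subdiff dot (phiR Re R0) f ↔
      (∃ l, f = Reᵀ *ᵥ l) ∧ Re *ᵥ e = Re *ᵥ (R0 *ᵥ f) := by
  have key : ∀ d : Fin n → ℝ, (f + d) ⬝ᵥ (R0 *ᵥ (f + d)) =
      f ⬝ᵥ (R0 *ᵥ f) + 2 * (d ⬝ᵥ (R0 *ᵥ f)) + d ⬝ᵥ (R0 *ᵥ d) := by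
    intro d
    simp only [Matrix.mulVec_add, dotProduct_add, add_dotProduct]
    rw [psd_symm hR0 f d]; ring
  constructor
  · rintro ⟨h1, h2⟩
    have hf : ∃ l, f = Reᵀ *ᵥ l := by
      by_contra h
      exact h1 (phiR_neg _ _ _ h)
    refine ⟨hf, ?_⟩
    rw [← sub_eq_zero, ← Matrix.mulVec_sub]
    set w := Re *ᵥ (e - R0 *ᵥ f) with hw
    have hw0 : w ⬝ᵥ w = 0 := by
      have := lin_zero ((1 / 2) * ((Reᵀ *ᵥ w) ⬝ᵥ (R0 *ᵥ (Reᵀ *ᵥ w)))) (-(w ⬝ᵥ w)) ?_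
      · linarith
      intro t
      have h3 := h2 (f + t • (Reᵀ *ᵥ w))
      have hf' : ∃ l, f + t • (Reᵀ *ᵥ w) = Reᵀ *ᵥ l := by
        obtain ⟨l, rfl⟩ := hf
        exact ⟨l + t • w, by rw [Matrix.mulVec_add, Matrix.mulVec_smul]⟩
      rw [phiR_pos _ _ _ hf, phiR_pos _ _ _ hf', dot_eq, key, add_sub_cancel_left] at h3
      norm_cast at h3
      simp only [Matrix.mulVec_smul, smul_dotProduct, dotProduct_smul, smul_eq_mul] at h3
      have h4 : w ⬝ᵥ w = e ⬝ᵥ (Reᵀ *ᵥ w) - (Reᵀ *ᵥ w) ⬝ᵥ (R0 *ᵥ f) := by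
        rw [dotProduct_comm (Reᵀ *ᵥ w), ← sub_dotProduct, tdot, ← hw]
      rw [h4]
      linarith
    exact dotProduct_self_eq_zero.1 hw0
  · rintro ⟨hf, he⟩
    refine ⟨by rw [phiR_pos _ _ _ hf]; exact EReal.coe_ne_top _, fun f' => ?_⟩
    by_cases hf' : ∃ l, f' = Reᵀ *ᵥ l
    · rw [phiR_pos _ _ _ hf, phiR_pos _ _ _ hf', dot_eq]
      norm_cast
      have h5 := key (f' - f)
      rw [add_sub_cancel] at h5
      have h6 : e ⬝ᵥ (f' - f) = (f' - f) ⬝ᵥ (R0 *ᵥ f) := by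
        obtain ⟨a, rfl⟩ := hf
        obtain ⟨b, rfl⟩ := hf'
        rw [dotProduct_comm _ (R0 *ᵥ _), ← Matrix.mulVec_sub, tdot, tdot, he]
      have h7 := psd_nonneg hR0 (f' - f)
      rw [h5, h6]
      linarith
    · rw [phiR_neg _ _ _ hf']; exact le_top

theorem generated {n : ℕ}
    (Rf Re R0 : Matrix (Fin n) (Fin n) ℝ)
    (hsym : Rf * Re.transpose = Re * Rf.transpose)
    (hpsd : (Rf * Re.transpose).PosSemidef)
    (hrank : (Matrix.fromCols Rf Re).rank = n)
    (hR0 : R0.PosSemidef)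
    (hR0eq : Re * R0 * Re.transpose = Re * Rf.transpose) (f e : Fin n → ℝ) :
    Rf *ᵥ f - Re *ᵥ e = 0 ↔ e ∈ subdiff dot (phiR Re R0) f := by
  rw [mem_subdiff Re R0 hR0]
  have hk : (∃ l, f = Reᵀ *ᵥ l) → Re *ᵥ (R0 *ᵥ f) = Rf *ᵥ f := by
    rintro ⟨l, rfl⟩
    rw [Matrix.mulVec_mulVec, Matrix.mulVec_mulVec, Matrix.mulVec_mulVec, hR0eq, hsym]
  constructor
  · intro h
    have hf := R_param Rf Re hsym hpsd hrank f e h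
    exact ⟨hf, by rw [hk hf]; exact (sub_eq_zero.1 h).symm⟩
  · rintro ⟨hf, he⟩
    rw [he, hk hf, sub_self]

/-- A linear resistive structure is generated by the convex function `φ_R`;
in particular it is maximal cyclically monotone. -/
theorem linearResistive_generated_by_phiR {n : ℕ}
    (Rf Re R0 : Matrix (Fin n) (Fin n) ℝ)
    (hsym : Rf * Re.transpose = Re * Rf.transpose)
    (hpsd : (Rf * Re.transpose).PosSemidef)
    (hrank : (Matrix.fromCols Rf Re).rank = n)
    (hR0 : R0.PosSemidef)
    (hR0eq : Re * R0 * Re.transpose = Re * Rf.transpose) :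
    ProperLscConvex (phiR Re R0) ∧
    {p : (Fin n → ℝ) × (Fin n → ℝ) | Rf.mulVec p.1 - Re.mulVec p.2 = 0} =
      {p : (Fin n → ℝ) × (Fin n → ℝ) | p.2 ∈ subdiff dot (phiR Re R0) p.1} ∧
    MaxCycMono2 {p : (Fin n → ℝ) × (Fin n → ℝ) | Rf.mulVec p.1 - Re.mulVec p.2 = 0} := by
  refine ⟨phiR_plc Re R0 hR0, ?_, ?_, ?_⟩
  · ext ⟨f, e⟩
    exact generated Rf Re R0 hsym hpsd hrank hR0 hR0eq f e
  · intro m _ f e hM hfm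
    have hV : ∀ i ≤ m + 1, ∃ l, f i = Reᵀ *ᵥ l := by
      intro i hi
      rcases Nat.lt_or_ge m i with h | h
      · obtain rfl : i = m + 1 := by omega
        rw [hfm]
        exact R_param Rf Re hsym hpsd hrank _ _ (hM 0 (Nat.zero_le _))
      · exact R_param Rf Re hsym hpsd hrank _ _ (hM i h)
    set q : ℕ → ℝ := fun i => (1 / 2) * (f i ⬝ᵥ (R0 *ᵥ f i)) with hq
    have hle : ∑ i ∈ Finset.range (m + 1), (q i - q (i + 1)) ≤
        ∑ i ∈ Finset.range (m + 1), dot (e i) (f i - f (i + 1)) := by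
      refine Finset.sum_le_sum fun i hi => ?_
      have hi' : i ≤ m := by have := Finset.mem_range.1 hi; omega
      have h := ((generated Rf Re R0 hsym hpsd hrank hR0 hR0eq _ _).1 (hM i hi')).2 (f (i + 1))
      rw [phiR_pos _ _ _ (hV i (by omega)), phiR_pos _ _ _ (hV (i + 1) (by omega))] at h
      norm_cast at h
      have hneg : dot (e i) (f i - f (i + 1)) = - dot (e i) (f (i + 1) - f i) := by
        rw [dot_eq, dot_eq, ← dotProduct_neg, neg_sub]
      rw [hneg]
      simp only [hq]
      linarith
    rw [Finset.sum_range_sub'] at hle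
    simp only [hq, hfm, sub_self] at hle
    exact hle
  · intro M' hM' hsub
    refine Set.Subset.antisymm ?_ hsub
    rintro ⟨f, e⟩ hfe
    obtain ⟨l, hl⟩ := exists_sum Rf Re hpsd hrank (f + e)
    have hmem : (Reᵀ *ᵥ l, Rfᵀ *ᵥ l) ∈ M' := by
      apply hsub
      simp [hsym]
    have h := hM' 1 le_rfl (fun i => if i = 1 then Reᵀ *ᵥ l else f)
      (fun i => if i = 1 then Rfᵀ *ᵥ l else e) (by
        intro i _
        by_cases h1 : i = 1
        · simpa [h1] using hmem
        · simpa [h1] using hfe) (by simp)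
    simp only [Finset.sum_range_succ, Finset.sum_range_zero, dot_eq] at h
    norm_num at h
    have he : e = Rfᵀ *ᵥ l + Reᵀ *ᵥ l - f := by rw [hl]; abel
    have h8 : (f - Reᵀ *ᵥ l) ⬝ᵥ (f - Reᵀ *ᵥ l) = 0 := by
      refine le_antisymm ?_ (Finset.sum_nonneg fun i _ => mul_self_nonneg _)
      rw [he] at h
      simp only [sub_dotProduct, add_dotProduct, dotProduct_sub] at h ⊢
      linarith
    have hf : f = Reᵀ *ᵥ l := sub_eq_zero.1 (dotProduct_self_eq_zero.1 h8)
    have he' : e = Rfᵀ *ᵥ l := by rw [he, hf]; abel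
    show Rf *ᵥ f - Re *ᵥ e = 0
    rw [he', hf]
    simp [hsym]
end

section
/- Let D ⊆ F' × F × E' × E be a Dirac structure and let R ⊆ F × E be a linear resistive structure. Then the composition D ⇄ R := {(f', e') ∈ F' × E' : there exists (f_R, e_R) ∈ R with (f', −f_R, e', e_R) ∈ D} is a maximal monotone relation. -/
/-- The indefinite bilinear form on `(F' × F) × (E' × E)`, elements ordered
as `(f', f, e', e)`: `⟪p, q⟫ = ⟨e_p, f_q⟩ + ⟨e_q, f_p⟩` with the pairing
summed over the two factors. -/
noncomputable def bform4 {n' n : ℕ}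
    (p q : (Fin n' → ℝ) × (Fin n → ℝ) × (Fin n' → ℝ) × (Fin n → ℝ)) : ℝ :=
  (dot p.2.2.1 q.1 + dot p.2.2.2 q.2.1) + (dot q.2.2.1 p.1 + dot q.2.2.2 p.2.1)

/-- A Dirac structure on `F' × F × E' × E`: a subspace equal to its
orthogonal companion w.r.t. the indefinite bilinear form. -/
def IsDirac4 {n' n : ℕ}
    (D : Set ((Fin n' → ℝ) × (Fin n → ℝ) × (Fin n' → ℝ) × (Fin n → ℝ))) : Prop :=
  (∃ W : Submodule ℝ ((Fin n' → ℝ) × (Fin n → ℝ) × (Fin n' → ℝ) × (Fin n → ℝ)),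
      D = ↑W) ∧
  D = {p | ∀ q ∈ D, bform4 p q = 0}

/-- Monotone relation `M ⊆ F' × E'` (elements `(f', e')`). -/
def Mono2 {n : ℕ} (M : Set ((Fin n → ℝ) × (Fin n → ℝ))) : Prop :=
  ∀ p ∈ M, ∀ q ∈ M, 0 ≤ dot (p.2 - q.2) (p.1 - q.1)

/-- Maximal monotone relation. -/
def MaxMono2 {n : ℕ} (M : Set ((Fin n → ℝ) × (Fin n → ℝ))) : Prop :=
  Mono2 M ∧ ∀ M', Mono2 M' → M ⊆ M' → M' = M

open Matrix in
theorem resist_aux {n : ℕ} (Rf Re : Matrix (Fin n) (Fin n) ℝ)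
    (hsym : Rf * Re.transpose = Re * Rf.transpose)
    (hrank : (Matrix.fromCols Rf Re).rank = n) (f e : Fin n → ℝ)
    (h : Rf *ᵥ f = Re *ᵥ e) : ∃ l : Fin n → ℝ, f = Reᵀ *ᵥ l ∧ e = Rfᵀ *ᵥ l := by
  have hS : IsUnit (Rf * Rfᵀ + Re * Reᵀ) := by
    have h1 := Matrix.rank_self_mul_transpose (Matrix.fromCols Rf Re)
    rw [Matrix.transpose_fromCols, Matrix.fromCols_mul_fromRows, hrank] at h1
    rw [← Matrix.mulVec_surjective_iff_isUnit]
    have h2 : LinearMap.range (Rf * Rfᵀ + Re * Reᵀ).mulVecLin = ⊤ := by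
      apply Submodule.eq_top_of_finrank_eq
      rw [Matrix.rank] at h1
      rw [h1]; simp
    exact LinearMap.range_eq_top.1 h2
  obtain ⟨T, hT⟩ := hS.exists_right_inv
  have hB : fromBlocks Rf (-Re) Re Rf * (fromBlocks Rfᵀ Reᵀ (-Reᵀ) Rfᵀ * fromBlocks T 0 0 T) = 1 := by
    rw [← mul_assoc, fromBlocks_multiply, fromBlocks_multiply]
    rw [← fromBlocks_one]
    congr 1
    · simp [hT]
    · simp [hsym]
    · simp [hsym]
    · simp [add_comm (Re * Reᵀ), hT]
  have hB2 := mul_eq_one_comm.1 hB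
  have h3 : (fromBlocks Rfᵀ Reᵀ (-Reᵀ) Rfᵀ * fromBlocks T 0 0 T) *ᵥ
      (fromBlocks Rf (-Re) Re Rf *ᵥ Sum.elim f e) = Sum.elim f e := by
    rw [mulVec_mulVec, hB2, one_mulVec]
  rw [← mulVec_mulVec] at h3
  simp only [fromBlocks_mulVec, Sum.elim_comp_inl, Sum.elim_comp_inr, neg_mulVec, h,
    add_neg_cancel, mulVec_zero, zero_mulVec, zero_add, add_zero, neg_zero] at h3
  refine ⟨T *ᵥ (Re *ᵥ f + Rf *ᵥ e), ?_, ?_⟩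
  · funext i
    simpa using (congrFun h3 (Sum.inl i)).symm
  · funext i
    simpa using (congrFun h3 (Sum.inr i)).symm

open Matrix in
theorem resist_nonneg {n : ℕ} (Rf Re : Matrix (Fin n) (Fin n) ℝ)
    (hpsd : (Rf * Re.transpose).PosSemidef) (l : Fin n → ℝ) :
    0 ≤ (Rfᵀ *ᵥ l) ⬝ᵥ (Reᵀ *ᵥ l) := by
  have h := hpsd.dotProduct_mulVec_nonneg l
  rw [← mulVec_mulVec, dotProduct_mulVec, ← mulVec_transpose] at h
  simpa using h

theorem dual_rep {n : ℕ} (φ : (Fin n → ℝ) →ₗ[ℝ] ℝ) : ∃ u : Fin n → ℝ, ∀ x, φ x = dot u x := by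
  refine ⟨fun i => φ (Pi.single i 1), fun x => ?_⟩
  have := LinearMap.pi_apply_eq_sum_univ φ x
  rw [this]
  unfold dot
  refine Finset.sum_congr rfl fun i _ => ?_
  rw [smul_eq_mul, mul_comm]
  congr 2
  funext j
  simp [Pi.single_apply, eq_comm]

/-- The composition of a Dirac structure with a linear resistive structure
(given by matrices `R_f`, `R_e` with `R_f R_eᵀ = R_e R_fᵀ ⪰ 0` and
`rank [R_f R_e] = n`) is a maximal monotone relation. -/
theorem dirac_comp_linearResistive_maxMonotone {n' n : ℕ}
    (D : Set ((Fin n' → ℝ) × (Fin n → ℝ) × (Fin n' → ℝ) × (Fin n → ℝ)))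
    (hD : IsDirac4 D)
    (Rf Re : Matrix (Fin n) (Fin n) ℝ)
    (hsym : Rf * Re.transpose = Re * Rf.transpose)
    (hpsd : (Rf * Re.transpose).PosSemidef)
    (hrank : (Matrix.fromCols Rf Re).rank = n) :
    MaxMono2 {p : (Fin n' → ℝ) × (Fin n' → ℝ) | ∃ fR eR : Fin n → ℝ,
      Rf.mulVec fR - Re.mulVec eR = 0 ∧ (p.1, -fR, p.2, eR) ∈ D} := by
  classical
  have hdot : ∀ {k : ℕ} (x y : Fin k → ℝ), dot x y = x ⬝ᵥ y := fun _ _ => rfl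
  obtain ⟨⟨W, rfl⟩, hperp⟩ := hD
  have hiso : ∀ x ∈ W, bform4 x x = 0 := by
    intro x hx
    have h1 : x ∈ (W : Set _) := hx
    rw [hperp] at h1
    exact h1 x hx
  have hmono : Mono2 {p : (Fin n' → ℝ) × (Fin n' → ℝ) | ∃ fR eR : Fin n → ℝ,
      Rf.mulVec fR - Re.mulVec eR = 0 ∧ (p.1, -fR, p.2, eR) ∈ (W : Set _)} := by
    rintro p ⟨f1, e1, hr1, hp⟩ q ⟨f2, e2, hr2, hq⟩
    have hd := W.sub_mem hp hq
    have h0 := hiso _ hd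
    obtain ⟨l, h1, h2⟩ := resist_aux Rf Re hsym hrank (f1 - f2) (e1 - e2) (by
      rw [Matrix.mulVec_sub, Matrix.mulVec_sub, sub_eq_zero.1 hr1, sub_eq_zero.1 hr2])
    have h3 := resist_nonneg Rf Re hpsd l
    rw [← h1, ← h2] at h3
    have h4 : -f1 - -f2 = -(f1 - f2) := by abel
    simp only [bform4, Prod.mk_sub_mk, h4, hdot, dotProduct_neg] at h0 ⊢
    linarith
  refine ⟨hmono, fun M' hM' hsub => Set.Subset.antisymm ?_ hsub⟩
  rintro ⟨a, b⟩ hab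
  let L : ((Fin n' → ℝ) × (Fin n → ℝ) × (Fin n' → ℝ) × (Fin n → ℝ)) →ₗ[ℝ]
      (Fin n' → ℝ) × (Fin n → ℝ) :=
    { toFun := fun p => (p.1 + p.2.2.1, -(Rf.mulVec p.2.1 + Re.mulVec p.2.2.2))
      map_add' := by
        intro x y
        ext i
        · simp; ring
        · simp [Matrix.mulVec_add]; ring
      map_smul' := by
        intro c x
        ext i
        · simp
        · simp [Matrix.mulVec_smul] }
  have hL : ∀ p, L p = (p.1 + p.2.2.1, -(Rf.mulVec p.2.1 + Re.mulVec p.2.2.2)) := fun _ => rfl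
  have key : (a + b, (0 : Fin n → ℝ)) ∈ W.map L := by
    by_contra hne
    obtain ⟨φ, hφ, hker⟩ := Submodule.exists_le_ker_of_notMem hne
    obtain ⟨u, hu⟩ := dual_rep (φ ∘ₗ LinearMap.inl ℝ _ _)
    obtain ⟨l, hl⟩ := dual_rep (φ ∘ₗ LinearMap.inr ℝ _ _)
    have hφ2 : ∀ x y, φ (x, y) = u ⬝ᵥ x + l ⬝ᵥ y := by
      intro x y
      have := hu x
      have h2 := hl y
      simp only [LinearMap.comp_apply, LinearMap.inl_apply, LinearMap.inr_apply, hdot] at this h2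
      rw [← this, ← h2, ← map_add]
      simp
    have hadj : ∀ (A : Matrix (Fin n) (Fin n) ℝ) (x : Fin n → ℝ),
        l ⬝ᵥ A.mulVec x = A.transpose.mulVec l ⬝ᵥ x := by
      intro A x
      rw [Matrix.dotProduct_mulVec, Matrix.mulVec_transpose]
    have hmem : (u, -(Re.transpose.mulVec l), u, -(Rf.transpose.mulVec l)) ∈ (W : Set _) := by
      rw [hperp]
      rintro ⟨f', f, e', e⟩ hq
      have h1 : φ (L (f', f, e', e)) = 0 := hker (Submodule.mem_map_of_mem hq)
      rw [hL, hφ2] at h1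
      simp only [dotProduct_add, dotProduct_neg, hadj] at h1
      simp only [bform4, hdot, neg_dotProduct, dotProduct_neg]
      rw [dotProduct_comm e' u, dotProduct_comm e]
      linarith
    have h6 := hiso _ hmem
    have h7 := resist_nonneg Rf Re hpsd l
    simp only [bform4, hdot, neg_dotProduct, dotProduct_neg, neg_neg] at h6
    have h8 : 0 ≤ u ⬝ᵥ u := Finset.sum_nonneg fun i _ => mul_self_nonneg _
    have h9 : u = 0 := dotProduct_self_eq_zero.1 (by linarith)
    apply hφ
    rw [hφ2, h9]
    simp
  obtain ⟨⟨f', f, e', e⟩, hW, hEq⟩ := key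
  rw [hL] at hEq
  simp only [Prod.mk.injEq] at hEq
  obtain ⟨hE1, hE2⟩ := hEq
  have hin : (f', e') ∈ {p : (Fin n' → ℝ) × (Fin n' → ℝ) | ∃ fR eR : Fin n → ℝ,
      Rf.mulVec fR - Re.mulVec eR = 0 ∧ (p.1, -fR, p.2, eR) ∈ (W : Set _)} := by
    refine ⟨-f, e, ?_, by simpa using hW⟩
    rw [Matrix.mulVec_neg, ← hE2]; abel
  have hm := hM' _ hab _ (hsub hin)
  have hbe : b - e' = -(a - f') := by
    have : b = f' + e' - a := by rw [hE1]; abel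
    rw [this]; abel
  simp only [hdot, hbe, neg_dotProduct] at hm
  have h8 : 0 ≤ (a - f') ⬝ᵥ (a - f') := Finset.sum_nonneg fun i _ => mul_self_nonneg _
  have h9 : a - f' = 0 := dotProduct_self_eq_zero.1 (by linarith)
  have ha : a = f' := sub_eq_zero.1 h9
  have hb : b = e' := by rw [h9, neg_zero] at hbe; exact sub_eq_zero.1 hbe
  rw [ha, hb]
  exact hin
end
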